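/- Let n ≥ 2, let λ, ν ∈ ℂ with ν − λ a nonnegative integer, and let I ⊆ {1, …, n} with n ∈ I and #I = i. Then (x_n² + Σ_{k=1}^{n−1} ε_I(k) x_k²)·𝒦_{λ−1,ν+1} = 4(ν − n + i)·𝒦_{λ,ν} − 8 (Σ_{k ∈ {1,…,n−1}∖I} ∂_k²) 𝒦_{λ+1,ν−1} as tempered distributions on ℝ^n. -/

import Mathlib

/-!
Everything takes place in the algebra of endomorphisms of the space of smooth functions, where
`P k = ∂_k` and `X k` (multiplication by `x_k`) satisfy the Weyl relations (`P_X`, `P_comm`).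
The kernel is a combination of the functionals `φ ↦ (∂_n ^ a Δ' ^ b φ)(0)`. Moving `x_k ^ 2` to the
left through `∂_n ^ a Δ' ^ b`, and discarding what is a multiple of `x_k` since it vanishes at the
origin, gives (`ev_normal`, `ev_tangential`)

* `∂_n ^ a x_n ^ 2 → a (a - 1) ∂_n ^ (a - 2)`,
* `Δ' ^ b x_k ^ 2 → 4 b (b - 1) Δ' ^ (b - 2) ∂_k ^ 2 + 2 b Δ' ^ (b - 1)` for `k < n`.

Summing with the signs `ε_I` (`ev_quadratic`), with `∑_{k < n} ε_I(k) = 2 i - n - 1`, reduces the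
theorem to an identity between coefficients. Write `α = λ - (n - 1) / 2`. The coefficients `A` of
the kernels obey the contiguity relations `A_normal` and `A_tangential`. The terms free of
`∑_{k ∉ I} ∂_k ^ 2` then carry the factor
`4 (α + l - k) + 2 (2 i - n - 1 + 2 k) = 4 (ν - n + i)`, and the other ones match by applying
`A_tangential` twice (`sum_identity`).
-/


/-- Partial derivative ∂_p of a complex-valued function on ℝ^n. -/
noncomputable def pd {n : ℕ} (p : Fin n) (f : (Fin n → ℝ) → ℂ) : (Fin n → ℝ) → ℂ :=
  fun x => fderiv ℝ f x (Pi.single p 1)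

/-- Δ' = ∂_1² + ⋯ + ∂_{n−1}², the Laplacian in the first n−1 variables on ℝ^n. -/
noncomputable def lapP {n : ℕ} (f : (Fin n → ℝ) → ℂ) : (Fin n → ℝ) → ℂ :=
  fun x => ∑ j ∈ Finset.univ.filter (fun j : Fin n => (j : ℕ) < n - 1), pd j (pd j f) x

/-- ∂_n, the partial derivative in the last variable on ℝ^n. -/
noncomputable def pdLast {n : ℕ} (f : (Fin n → ℝ) → ℂ) : (Fin n → ℝ) → ℂ :=
  if h : 0 < n then pd ⟨n - 1, by omega⟩ f else 0

/-- The coefficient of z^{l−2k} in the renormalized Gegenbauer polynomial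
C̃_l^α(z) = Σ_{k=0}^{⌊l/2⌋} (−1)^k (∏_{m=⌊(l+1)/2⌋}^{l−k−1}(α+m)) (2z)^{l−2k}/(k!(l−2k)!). -/
noncomputable def gegenCoeff (α : ℂ) (l k : ℕ) : ℂ :=
  (-1 : ℂ) ^ k * (∏ m ∈ Finset.Ico ((l + 1) / 2) (l - k), (α + (m : ℂ))) *
    2 ^ (l - 2 * k) / ((Nat.factorial k : ℂ) * (Nat.factorial (l - 2 * k) : ℂ))

/-- The action on a test function `φ` of the tempered distribution
`𝒦_{λ,ν} = Σ_{k=0}^{⌊l/2⌋} a_k (−1)^k (Δ')^k ∂_n^{l−2k} δ` on ℝ^n, where `l = ν − λ`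
and `a_k` are the coefficients of `C̃_l^{λ−(n−1)/2}`; each `∂` contributes a sign `−1`
and δ evaluates at 0.  By convention `𝒦_{λ,ν} = 0` when `l < 0`. -/
noncomputable def Kact (n : ℕ) (lam : ℂ) (l : ℤ) (φ : (Fin n → ℝ) → ℂ) : ℂ :=
  if 0 ≤ l then
    ∑ k ∈ Finset.range (l.toNat / 2 + 1),
      gegenCoeff (lam - ((n : ℂ) - 1) / 2) l.toNat k *
        ((-1 : ℂ) ^ k * ((-1 : ℂ) ^ (l.toNat - 2 * k) *
          (pdLast (n := n))^[l.toNat - 2 * k] ((lapP (n := n))^[k] φ) 0))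
  else 0

/-- γ(μ, a) := 1 if a is odd, μ + a/2 if a is even. -/
noncomputable def gam (mu : ℂ) (a : ℕ) : ℂ := if a % 2 = 1 then 1 else mu + ((a / 2 : ℕ) : ℂ)

/-- ε_I(k) = 1 if k ∈ I, −1 otherwise. -/
def epsSet {n : ℕ} (I : Finset (Fin n)) (k : Fin n) : ℝ := if k ∈ I then 1 else -1

/-! ### Commutators with powers -/

/-- If `[T, x] = c` with `c` commuting with `T`, then `[T ^ b, x] = b T ^ (b - 1) c`. -/
lemma pow_mul_of_comm {R : Type*} [Ring R] {T x c : R} (h : T * x = x * T + c)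
    (hc : Commute T c) (b : ℕ) :
    T ^ b * x = x * T ^ b + (b : R) * (T ^ (b - 1) * c) := by
  induction b with
  | zero => simp
  | succ b ih =>
    have e : (b : R) * (T ^ (b - 1) * c) * T = (b : R) * (T ^ b * c) := by
      rcases b with _ | b
      · simp
      · rw [mul_assoc, mul_assoc, ← hc.eq, ← mul_assoc (T ^ _) T, Nat.add_sub_cancel, pow_succ]
    calc T ^ (b + 1) * x = T ^ b * x * T + T ^ b * c := by
          rw [pow_succ, mul_assoc, h, mul_add, mul_assoc]
      _ = _ := by
          rw [ih, add_mul, e, Nat.add_sub_cancel, pow_succ]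
          push_cast
          noncomm_ring

/-- Moving `T ^ b` past `x ^ 2`, modulo the right ideal generated by `x`, when
`[T, x] = c` commutes with `T` and `[c, x] = e`. -/
lemma pow_mul_sq_of_comm {R : Type*} [Ring R] {T x c e : R} (h : T * x = x * T + c)
    (hc : Commute T c) (he : c * x = x * c + e) (b : ℕ) :
    ∃ Y : R, T ^ b * (x * x) = x * Y + ((b * (b - 1) : ℕ) : R) * (T ^ (b - 2) * (c * c))
      + (b : R) * (T ^ (b - 1) * e) := by
  refine ⟨T ^ b * x + (b : R) * (T ^ (b - 1) * c), ?_⟩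
  have h1 := pow_mul_of_comm h hc b
  have h2 := pow_mul_of_comm h hc (b - 1)
  have cx : (b : R) * x = x * b := Nat.cast_commute b x
  calc T ^ b * (x * x) = x * (T ^ b * x) + (b : R) * (T ^ (b - 1) * (c * x)) := by
        rw [← mul_assoc]
        refine (congrArg (· * x) h1).trans ?_
        noncomm_ring
    _ = x * (T ^ b * x) + (b : R) * (T ^ (b - 1) * x * c) + (b : R) * (T ^ (b - 1) * e) := by
        rw [he]; noncomm_ring
    _ = x * (T ^ b * x) + (b : R) * x * (T ^ (b - 1) * c)
          + (b : R) * ((b - 1 : ℕ) : R) * (T ^ (b - 2) * (c * c))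
          + (b : R) * (T ^ (b - 1) * e) := by
        rw [h2, show b - 1 - 1 = b - 2 by omega]; noncomm_ring
    _ = _ := by rw [cx]; push_cast; noncomm_ring

/-! ### The Weyl algebra acting on smooth functions -/

open scoped ContDiff

/-- The space of smooth complex-valued functions on `ℝ^n`. -/
def Smo (n : ℕ) : Submodule ℂ ((Fin n → ℝ) → ℂ) where
  carrier := {f | ContDiff ℝ ∞ f}
  add_mem' {f g} (hf : ContDiff ℝ ∞ f) (hg : ContDiff ℝ ∞ g) := ContDiff.add hf hg
  zero_mem' := (contDiff_const : ContDiff ℝ ∞ fun _ : Fin n → ℝ => (0 : ℂ))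
  smul_mem' c f (hf : ContDiff ℝ ∞ f) := ContDiff.const_smul c hf

lemma diff_coe {n : ℕ} (f : Smo n) : Differentiable ℝ (f : (Fin n → ℝ) → ℂ) :=
  have hf : ContDiff ℝ ∞ (f : (Fin n → ℝ) → ℂ) := f.2
  hf.differentiable (by simp)

lemma pd_smooth {n : ℕ} (p : Fin n) {f : (Fin n → ℝ) → ℂ} (hf : ContDiff ℝ ∞ f) :
    ContDiff ℝ ∞ (pd p f) :=
  (hf.fderiv_right (m := ∞) (by simp)).clm_apply contDiff_const

/-- The partial derivative `∂_p` as an endomorphism of the space of smooth functions. -/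
noncomputable def P {n : ℕ} (p : Fin n) : Module.End ℂ (Smo n) where
  toFun f := ⟨pd p f, pd_smooth p f.2⟩
  map_add' f g := by
    ext x
    change fderiv ℝ ((f : (Fin n → ℝ) → ℂ) + (g : (Fin n → ℝ) → ℂ)) x _
      = fderiv ℝ (f : (Fin n → ℝ) → ℂ) x _ + fderiv ℝ (g : (Fin n → ℝ) → ℂ) x _
    rw [fderiv_add (diff_coe f x) (diff_coe g x)]; rfl
  map_smul' c f := by
    ext x
    change fderiv ℝ (c • (f : (Fin n → ℝ) → ℂ)) x _ = c • fderiv ℝ (f : (Fin n → ℝ) → ℂ) x _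
    rw [fderiv_const_smul (diff_coe f x)]; rfl

lemma coord_smooth {n : ℕ} (p : Fin n) : ContDiff ℝ ∞ (fun x : Fin n → ℝ => (x p : ℂ)) :=
  Complex.ofRealCLM.contDiff.comp (contDiff_apply ℝ ℝ p)

/-- Multiplication by the coordinate `x_p` as an endomorphism of the space of smooth functions. -/
noncomputable def X {n : ℕ} (p : Fin n) : Module.End ℂ (Smo n) where
  toFun f := ⟨fun x => (x p : ℂ) * (f : (Fin n → ℝ) → ℂ) x, (coord_smooth p).mul f.2⟩
  map_add' f g := by ext x; exact mul_add _ _ _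
  map_smul' c f := by ext x; exact mul_left_comm _ _ _

lemma P_X {n : ℕ} (p q : Fin n) : P p * X q = X q * P p + (if p = q then 1 else 0) := by
  ext f x
  have hx : HasFDerivAt (fun x : Fin n → ℝ => (x q : ℂ))
      (Complex.ofRealCLM.comp (ContinuousLinearMap.proj q)) x :=
    (Complex.ofRealCLM.comp
      (ContinuousLinearMap.proj (R := ℝ) (φ := fun _ : Fin n => ℝ) q)).hasFDerivAt
  have h := hx.mul (diff_coe f x).hasFDerivAt
  have : ((P p * X q) f : (Fin n → ℝ) → ℂ) x
      = fderiv ℝ (fun x => (x q : ℂ) * (f : (Fin n → ℝ) → ℂ) x) x (Pi.single p 1) := rfl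
  rw [this, show (fun x => (x q : ℂ) * (f : (Fin n → ℝ) → ℂ) x)
    = (fun x => (x q : ℂ)) * (f : (Fin n → ℝ) → ℂ) from rfl, h.fderiv]
  have h2 : ((X q * P p) f : (Fin n → ℝ) → ℂ) x
      = (x q : ℂ) * fderiv ℝ f x (Pi.single p 1) := rfl
  split_ifs with hpq
  · subst hpq
    simp [h2, -Module.End.mul_apply]
  · simp [h2, -Module.End.mul_apply, Ne.symm hpq]

/-- Symmetry of second derivatives. -/
lemma P_comm {n : ℕ} (p q : Fin n) : Commute (P p) (P q) := by
  ext f x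
  have hf : ContDiff ℝ ∞ (f : (Fin n → ℝ) → ℂ) := f.2
  have hd : Differentiable ℝ (fderiv ℝ (f : (Fin n → ℝ) → ℂ)) :=
    (hf.fderiv_right (m := ∞) (by simp)).differentiable (by simp)
  have key : ∀ p q : Fin n, ((P p * P q) f : (Fin n → ℝ) → ℂ) x
      = fderiv ℝ (fderiv ℝ (f : (Fin n → ℝ) → ℂ)) x (Pi.single p 1) (Pi.single q 1) := by
    intro p q
    change fderiv ℝ (fun x => fderiv ℝ (f : (Fin n → ℝ) → ℂ) x (Pi.single q 1)) x _ = _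
    rw [fderiv_clm_apply (hd x) (differentiableAt_const _)]
    simp
  rw [key, key]
  refine (hf.contDiffAt.isSymmSndFDerivAt ?_).eq _ _
  rw [minSmoothness_of_isRCLikeNormedField]
  exact WithTop.coe_le_coe.2 le_top

/-- Indices of the first `n - 1` coordinates. -/
abbrev J (n : ℕ) : Finset (Fin n) := Finset.univ.filter (fun k : Fin n => (k : ℕ) < n - 1)

/-- `Δ'` as an endomorphism of the space of smooth functions. -/
noncomputable def L (n : ℕ) : Module.End ℂ (Smo n) := ∑ j ∈ J n, P j * P j

lemma lapP_coe {n : ℕ} (f : Smo n) : lapP (f : (Fin n → ℝ) → ℂ) = (L n f : Smo n) := by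
  ext x
  simp only [L, LinearMap.sum_apply, Submodule.coe_sum, Finset.sum_apply]
  rfl

lemma pdLast_coe {n : ℕ} (hn : 0 < n) (f : Smo n) :
    pdLast (f : (Fin n → ℝ) → ℂ) = (P ⟨n - 1, by omega⟩ f : Smo n) := by
  simp only [pdLast, dif_pos hn]; rfl

lemma iterate_coe {n : ℕ} (T : Module.End ℂ (Smo n)) (G : ((Fin n → ℝ) → ℂ) → ((Fin n → ℝ) → ℂ))
    (h : ∀ f : Smo n, G f = (T f : Smo n)) (a : ℕ) (f : Smo n) :
    G^[a] f = ((T ^ a) f : Smo n) := by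
  induction a with
  | zero => rfl
  | succ a ih => rw [Function.iterate_succ_apply', ih, h, pow_succ']; rfl

/-- Evaluation at the origin. -/
def ev (n : ℕ) : Smo n →ₗ[ℂ] ℂ where
  toFun f := (f : (Fin n → ℝ) → ℂ) 0
  map_add' _ _ := rfl
  map_smul' _ _ := rfl

lemma ev_X {n : ℕ} (p : Fin n) (f : Smo n) : ev n (X p f) = 0 := by
  change (((0 : Fin n → ℝ) p : ℝ) : ℂ) * _ = 0
  simp

/-! ### Quadratic multiplication operators and point functionals -/

lemma P_X_of_ne {n : ℕ} {p q : Fin n} (h : p ≠ q) : Commute (P p) (X q) := by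
  have := P_X p q
  rwa [if_neg h, add_zero] at this

lemma L_X {n : ℕ} {k : Fin n} (hk : k ∈ J n) : L n * X k = X k * L n + 2 * P k := by
  have : ∀ j ∈ J n, P j * P j * X k = X k * (P j * P j) + (if j = k then 2 * P k else 0) := by
    intro j _
    split_ifs with h
    · subst h
      have := P_X j j
      rw [if_pos rfl] at this
      rw [mul_assoc, this, mul_add, ← mul_assoc, this]
      noncomm_ring
    · rw [add_zero]
      exact ((P_X_of_ne h).mul_left (P_X_of_ne h)).eq
  rw [L, Finset.sum_mul, Finset.sum_congr rfl this, Finset.sum_add_distrib, ← Finset.mul_sum,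
    Finset.sum_ite_eq' (J n) k, if_pos hk]

lemma L_P {n : ℕ} (k : Fin n) : Commute (L n) (P k) :=
  Commute.sum_left _ _ _ fun j _ => (P_comm j k).mul_left (P_comm j k)

/-- Effect of `x_k ^ 2` (for `k < n`) on the functional `φ ↦ (∂_n ^ a Δ' ^ b φ)(0)`. Where the
exponents `b - 1`, `b - 2` are truncated, their coefficients vanish. -/
lemma ev_tangential {n : ℕ} {d k : Fin n} (hd : d ∉ J n) (hk : k ∈ J n) (a b : ℕ) (f : Smo n) :
    ev n ((P d ^ a * L n ^ b * (X k * X k)) f)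
      = 4 * (b * (b - 1) : ℂ) * ev n ((P d ^ a * L n ^ (b - 2) * (P k * P k)) f)
        + 2 * b * ev n ((P d ^ a * L n ^ (b - 1)) f) := by
  have hdk : d ≠ k := fun h => hd (h ▸ hk)
  have h2 : Commute (L n) (2 : Module.End ℂ (Smo n)) := Nat.cast_commute 2 (L n) |>.symm
  have he : 2 * P k * X k = X k * (2 * P k) + 2 := by
    rw [mul_assoc, P_X, if_pos rfl, two_mul, two_mul, mul_add, ← one_add_one_eq_two]
    abel
  obtain ⟨Y, hY⟩ := pow_mul_sq_of_comm (R := Module.End ℂ (Smo n)) (L_X hk)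
    (h2.mul_right (L_P k)) he b
  have e : P d ^ a * L n ^ b * (X k * X k) = X k * (P d ^ a * Y)
      + (4 * (b * (b - 1) : ℂ)) • (P d ^ a * L n ^ (b - 2) * (P k * P k))
      + (2 * b : ℂ) • (P d ^ a * L n ^ (b - 1)) := by
    have hc : ((b * (b - 1) : ℕ) : ℂ) = b * (b - 1) := by
      rcases b with _ | b <;> simp
    rw [← hc]
    rw [mul_assoc, hY, mul_add, mul_add, ← mul_assoc, ((P_X_of_ne hdk).pow_left a).eq, mul_assoc]
    have nat : ∀ (m : ℕ) (A : Module.End ℂ (Smo n)), (m : Module.End ℂ (Smo n)) * A = (m : ℂ) • A := by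
      intro m A; rw [← nsmul_eq_mul, Nat.cast_smul_eq_nsmul]
    congr 1
    · congr 1
      rw [nat, show (2 : Module.End ℂ (Smo n)) * P k * (2 * P k) = ((4 : ℕ) : ℂ) • (P k * P k) by
        rw [← nat]; push_cast; noncomm_ring]
      simp only [mul_smul_comm, smul_smul, mul_assoc]
      congr 1
      push_cast; ring
    · rw [nat, show (2 : Module.End ℂ (Smo n)) = ((2 : ℕ) : ℂ) • 1 by rw [← nat]; simp]
      simp only [mul_smul_comm, smul_smul, mul_one]
      congr 1
      push_cast; ring
  rw [e]
  simp only [LinearMap.add_apply, LinearMap.smul_apply, map_add, map_smul, smul_eq_mul]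
  rw [Module.End.mul_apply (X k), ev_X, zero_add]

/-- Effect of `x_n ^ 2` on the functional `φ ↦ (∂_n ^ a Δ' ^ b φ)(0)`. -/
lemma ev_normal {n : ℕ} {d : Fin n} (hd : d ∉ J n) (a b : ℕ) (f : Smo n) :
    ev n ((P d ^ a * L n ^ b * (X d * X d)) f)
      = (a * (a - 1) : ℂ) * ev n ((P d ^ (a - 2) * L n ^ b) f) := by
  have hL : Commute (L n) (X d) := Commute.sum_left _ _ _ fun j hj => by
    have : j ≠ d := fun h => hd (h ▸ hj)
    exact (P_X_of_ne this).mul_left (P_X_of_ne this)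
  have h1 := P_X d d
  rw [if_pos rfl] at h1
  obtain ⟨Y, hY⟩ := pow_mul_sq_of_comm (R := Module.End ℂ (Smo n)) (T := P d) (x := X d)
    (c := 1) (e := 0) h1 (Commute.one_right _) (by simp) a
  have e : P d ^ a * L n ^ b * (X d * X d) = X d * (Y * L n ^ b)
      + (a * (a - 1) : ℂ) • (P d ^ (a - 2) * L n ^ b) := by
    have hc : ((a * (a - 1) : ℕ) : ℂ) = a * (a - 1) := by
      rcases a with _ | a <;> simp
    rw [← hc, mul_assoc, ((hL.pow_left b).mul_right (hL.pow_left b)).eq, ← mul_assoc, hY,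
      Nat.cast_smul_eq_nsmul, nsmul_eq_mul]
    simp only [mul_one, mul_zero, add_zero, add_mul, mul_assoc]
  rw [e]
  simp only [LinearMap.add_apply, LinearMap.smul_apply, map_add, map_smul, smul_eq_mul]
  rw [Module.End.mul_apply (X d), ev_X, zero_add]

lemma Kact_coe {n : ℕ} (hn : 0 < n) (lam : ℂ) (N : ℕ) (f : Smo n) :
    Kact n lam N f = ∑ k ∈ Finset.range (N / 2 + 1),
      gegenCoeff (lam - ((n : ℂ) - 1) / 2) N k * ((-1 : ℂ) ^ k * ((-1 : ℂ) ^ (N - 2 * k) *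
        ev n ((P (⟨n - 1, by omega⟩ : Fin n) ^ (N - 2 * k) * L n ^ k) f))) := by
  rw [Kact, if_pos (by positivity)]
  simp only [Int.toNat_natCast]
  refine Finset.sum_congr rfl fun k _ => ?_
  rw [iterate_coe (L n) _ lapP_coe, iterate_coe _ _ (pdLast_coe hn)]
  rfl

/-! ### Coefficients of the kernels -/

/-- The coefficient of `(Δ') ^ k ∂_n ^ (N - 2 k)` in the kernel, up to the global sign `(-1) ^ N`. -/
noncomputable def A (α : ℂ) (N k : ℕ) : ℂ :=
  (∏ m ∈ Finset.Ico ((N + 1) / 2) (N - k), (α + (m : ℂ))) *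
    2 ^ (N - 2 * k) / ((Nat.factorial k : ℂ) * (Nat.factorial (N - 2 * k) : ℂ))

lemma gegen_A (α : ℂ) {N k : ℕ} (h : 2 * k ≤ N) (z : ℂ) :
    gegenCoeff α N k * ((-1 : ℂ) ^ k * ((-1 : ℂ) ^ (N - 2 * k) * z)) = (-1) ^ N * (A α N k * z) := by
  obtain ⟨m, rfl⟩ := Nat.exists_eq_add_of_le h
  -- the two signs `(-1) ^ k`, from the polynomial and from the kernel, cancel
  have h1 : (-1 : ℂ) ^ k * (-1) ^ k = 1 := by rw [← mul_pow]; simp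
  have h2 : (-1 : ℂ) ^ (2 * k + m) = (-1) ^ m := by rw [pow_add, pow_mul]; simp
  rw [h2, Nat.add_sub_cancel_left]
  unfold gegenCoeff A
  rw [Nat.add_sub_cancel_left]
  linear_combination (∏ m ∈ Finset.Ico ((2 * k + m + 1) / 2) (2 * k + m - k), (α + (m : ℂ))) *
    2 ^ m / ((Nat.factorial k : ℂ) * (Nat.factorial m : ℂ)) * (-1) ^ m * z * h1

lemma prod_shift (α : ℂ) (a b : ℕ) :
    ∏ m ∈ Finset.Ico (a + 1) (b + 1), (α - 1 + (m : ℂ)) = ∏ m ∈ Finset.Ico a b, (α + (m : ℂ)) := by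
  rw [← Finset.prod_Ico_add' (fun m : ℕ => α - 1 + (m : ℂ)) a b 1]
  refine Finset.prod_congr rfl fun m _ => ?_
  push_cast; ring

/-- Contiguity relation giving the `∂_n`-part. -/
lemma A_normal (α : ℂ) {N k : ℕ} (h : 2 * k ≤ N) :
    A (α - 1) (N + 2) k * (((N + 2 - 2 * k : ℕ) : ℂ) * (((N + 2 - 2 * k : ℕ) : ℂ) - 1))
      = 4 * (α + N - k) * A α N k := by
  obtain ⟨m, rfl⟩ := Nat.exists_eq_add_of_le h
  unfold A
  rw [show 2 * k + m + 2 - 2 * k = m + 2 by omega, Nat.add_sub_cancel_left,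
    show (2 * k + m + 2 + 1) / 2 = (2 * k + m + 1) / 2 + 1 by omega,
    show 2 * k + m + 2 - k = (k + m + 1) + 1 by omega, prod_shift,
    Finset.prod_Ico_succ_top (by omega), show 2 * k + m - k = k + m by omega,
    Nat.factorial_succ, Nat.factorial_succ]
  have h1 : ((m : ℂ) + 1) ≠ 0 := by exact_mod_cast Nat.succ_ne_zero m
  have h2 : ((m : ℂ) + 2) ≠ 0 := by exact_mod_cast Nat.succ_ne_zero (m + 1)
  have h3 : (k.factorial : ℂ) ≠ 0 := by exact_mod_cast k.factorial_ne_zero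
  have h4 : (m.factorial : ℂ) ≠ 0 := by exact_mod_cast m.factorial_ne_zero
  push_cast
  rw [show (m : ℂ) + 1 + 1 = m + 2 by ring]
  field_simp
  ring

/-- Contiguity relation giving the first-order `Δ'`-part. -/
lemma A_tangential (α : ℂ) {N k : ℕ} (h : 2 * k ≤ N) :
    A (α - 1) (N + 2) (k + 1) * ((k + 1 : ℕ) : ℂ) = A α N k := by
  unfold A
  rw [show N + 2 - 2 * (k + 1) = N - 2 * k by omega,
    show (N + 2 + 1) / 2 = (N + 1) / 2 + 1 by omega,
    show N + 2 - (k + 1) = (N - k) + 1 by omega, prod_shift, Nat.factorial_succ]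
  have h1 : ((k : ℂ) + 1) ≠ 0 := by exact_mod_cast Nat.succ_ne_zero k
  have h3 : (k.factorial : ℂ) ≠ 0 := by exact_mod_cast k.factorial_ne_zero
  push_cast
  field_simp

/-- Coefficient identity, summed: `u a b` and `v a b` stand for `∂_n ^ a Δ' ^ b` applied at `0`
to `φ` and to `∑ ∂_k ^ 2 φ` respectively. The terms `b = 0` and `b = 0, 1` drop out of the
parts containing `b` and `b (b - 1)`, and the last `b` drops out of the `∂_n`-part, where the order
in `∂_n` is `0` or `1`. -/
lemma sum_identity (α s : ℂ) (N : ℕ) (u v : ℕ → ℕ → ℂ) :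
    ∑ b ∈ Finset.range ((N + 2) / 2 + 1), A (α - 1) (N + 2) b *
      (((N + 2 - 2 * b : ℕ) : ℂ) * (((N + 2 - 2 * b : ℕ) : ℂ) - 1) * u (N + 2 - 2 * b - 2) b
        + (2 * b * (s + 2 * (b - 1)) : ℂ) * u (N + 2 - 2 * b) (b - 1)
        - 8 * (b * (b - 1) : ℂ) * v (N + 2 - 2 * b) (b - 2))
    = (∑ k ∈ Finset.range (N / 2 + 1), (4 * (α + N) + 2 * s) * (A α N k * u (N - 2 * k) k))
      - 8 * (if 2 ≤ N then ∑ k ∈ Finset.range ((N - 2) / 2 + 1),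
          A (α + 1) (N - 2) k * v (N - 2 - 2 * k) k else 0) := by
  have hr : (N + 2) / 2 + 1 = N / 2 + 1 + 1 := by omega
  have S1 : ∑ b ∈ Finset.range (N / 2 + 1 + 1), A (α - 1) (N + 2) b *
      (((N + 2 - 2 * b : ℕ) : ℂ) * (((N + 2 - 2 * b : ℕ) : ℂ) - 1)) * u (N + 2 - 2 * b - 2) b
      = ∑ k ∈ Finset.range (N / 2 + 1), 4 * (α + N - k) * (A α N k * u (N - 2 * k) k) := by
    rw [Finset.sum_range_succ]
    have : ((N + 2 - 2 * (N / 2 + 1) : ℕ) : ℂ) * (((N + 2 - 2 * (N / 2 + 1) : ℕ) : ℂ) - 1) = 0 := by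
      rcases Nat.mod_two_eq_zero_or_one N with h | h
      · rw [show N + 2 - 2 * (N / 2 + 1) = 0 by omega]; simp
      · rw [show N + 2 - 2 * (N / 2 + 1) = 1 by omega]; simp
    rw [this, mul_zero, zero_mul, add_zero]
    refine Finset.sum_congr rfl fun k hk => ?_
    have hk' : 2 * k ≤ N := by have := Finset.mem_range.1 hk; omega
    rw [A_normal α hk', show N + 2 - 2 * k - 2 = N - 2 * k by omega, mul_assoc]
  have S2 : ∑ b ∈ Finset.range (N / 2 + 1 + 1), A (α - 1) (N + 2) b *
      (2 * b * (s + 2 * (b - 1)) : ℂ) * u (N + 2 - 2 * b) (b - 1)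
      = ∑ k ∈ Finset.range (N / 2 + 1), (2 * s + 4 * k) * (A α N k * u (N - 2 * k) k) := by
    rw [Finset.sum_range_succ']
    simp only [Nat.cast_zero, mul_zero, zero_mul, add_zero]
    refine Finset.sum_congr rfl fun k hk => ?_
    have hk' : 2 * k ≤ N := by have := Finset.mem_range.1 hk; omega
    rw [← A_tangential α hk', show N + 2 - 2 * (k + 1) = N - 2 * k by omega, Nat.add_sub_cancel]
    push_cast; ring
  have S3 : ∑ b ∈ Finset.range (N / 2 + 1 + 1), A (α - 1) (N + 2) b *
      (b * (b - 1) : ℂ) * v (N + 2 - 2 * b) (b - 2)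
      = if 2 ≤ N then ∑ k ∈ Finset.range ((N - 2) / 2 + 1),
          A (α + 1) (N - 2) k * v (N - 2 - 2 * k) k else 0 := by
    rw [Finset.sum_range_succ', Finset.sum_range_succ']
    simp only [Nat.cast_zero, Nat.cast_one, zero_add, sub_self, mul_zero, zero_mul, add_zero]
    split_ifs with hN
    · obtain ⟨M, rfl⟩ := Nat.exists_eq_add_of_le' hN
      rw [Nat.add_sub_cancel, show (M + 2) / 2 = M / 2 + 1 by omega]
      refine Finset.sum_congr rfl fun k hk => ?_
      have hk' : 2 * k ≤ M := by have := Finset.mem_range.1 hk; omega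
      have e1 := A_tangential (α + 1) hk'
      have e2 := A_tangential α (N := M + 2) (k := k + 1) (by omega)
      rw [add_sub_cancel_right] at e1
      rw [← e1, ← e2, show M + 2 + 2 - 2 * (k + 1 + 1) = M - 2 * k by omega,
        show k + 1 + 1 - 2 = k by omega]
      push_cast; ring
    · rw [show N / 2 = 0 by omega]; simp
  rw [hr, ← S3]
  have S12 : ∑ k ∈ Finset.range (N / 2 + 1), (4 * (α + N) + 2 * s) * (A α N k * u (N - 2 * k) k)
      = (∑ k ∈ Finset.range (N / 2 + 1), 4 * (α + N - k) * (A α N k * u (N - 2 * k) k))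
        + ∑ k ∈ Finset.range (N / 2 + 1), (2 * s + 4 * k) * (A α N k * u (N - 2 * k) k) := by
    rw [← Finset.sum_add_distrib]
    exact Finset.sum_congr rfl fun k _ => by ring
  rw [S12, ← S1, ← S2, Finset.mul_sum, ← Finset.sum_add_distrib, ← Finset.sum_sub_distrib]
  exact Finset.sum_congr rfl fun k _ => by ring

/-! ### Assembling the signs of the quadratic form -/

/-- Effect of the whole quadratic form on `φ ↦ (∂_n ^ a Δ' ^ b φ)(0)`: since
`ε_I = 1 - 2 · 1_{Iᶜ}`, the second-order part `∑ ε_I(k) ∂_k ^ 2` equals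
`Δ' - 2 ∑_{k ∉ I} ∂_k ^ 2`. -/
lemma ev_quadratic {n : ℕ} {d : Fin n} (hd : d ∉ J n) (I : Finset (Fin n)) (a b : ℕ) (f : Smo n) :
    ev n ((P d ^ a * L n ^ b * (X d * X d + ∑ k ∈ J n, (epsSet I k : ℂ) • (X k * X k))) f)
      = (a * (a - 1) : ℂ) * ev n ((P d ^ (a - 2) * L n ^ b) f)
        + (2 * b * ((∑ k ∈ J n, (epsSet I k : ℂ)) + 2 * (b - 1)) : ℂ)
            * ev n ((P d ^ a * L n ^ (b - 1)) f)
        - 8 * (b * (b - 1) : ℂ) *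
            ev n ((P d ^ a * L n ^ (b - 2)) ((∑ k ∈ J n \ I, P k * P k) f)) := by
  have e0 : (∑ k ∈ J n, (epsSet I k : ℂ) • (P k * P k))
      + (2 : ℂ) • ∑ k ∈ J n \ I, P k * P k = L n := by
    rw [L, ← Finset.filter_notMem_eq_sdiff,
      Finset.sum_filter (s := J n) (p := fun k => k ∉ I) (f := fun k => P k * P k),
      Finset.smul_sum, ← Finset.sum_add_distrib]
    refine Finset.sum_congr rfl fun k _ => ?_
    unfold epsSet
    by_cases hk : k ∈ I
    · simp [hk]
    · simp only [hk, if_false, not_false_eq_true, if_true]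
      push_cast
      rw [← add_smul]; norm_num
  generalize (∑ k ∈ J n \ I, P k * P k) = M at e0 ⊢
  have e1 : (b * (b - 1) : ℂ) * ev n ((P d ^ a * L n ^ (b - 2) * L n) f)
      = (b * (b - 1) : ℂ) * ev n ((P d ^ a * L n ^ (b - 1)) f) := by
    rcases b with _ | _ | b
    · simp
    · simp
    · rw [mul_assoc (P d ^ a), show b + 1 + 1 - 2 = b by omega, ← pow_succ]; rfl
  have e2 : ∑ k ∈ J n, (epsSet I k : ℂ) * ev n ((P d ^ a * L n ^ (b - 2) * (P k * P k)) f)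
      = ev n ((P d ^ a * L n ^ (b - 2) * L n) f)
        - 2 * ev n ((P d ^ a * L n ^ (b - 2)) (M f)) := by
    have := congrArg (fun T : Module.End ℂ (Smo n) => ev n ((P d ^ a * L n ^ (b - 2)) (T f))) e0
    simp only [LinearMap.sum_apply, LinearMap.add_apply, LinearMap.smul_apply, map_sum, map_add,
      map_smul, smul_eq_mul] at this
    exact eq_sub_of_add_eq this
  rw [mul_add, Finset.mul_sum]
  simp only [mul_smul_comm, LinearMap.add_apply, LinearMap.sum_apply, LinearMap.smul_apply,
    map_add, map_sum, map_smul, smul_eq_mul]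
  rw [ev_normal hd, Finset.sum_congr rfl fun k hk => by rw [ev_tangential hd hk]]
  have e3 : ∑ k ∈ J n, (epsSet I k : ℂ) *
      (4 * (b * (b - 1) : ℂ) * ev n ((P d ^ a * L n ^ (b - 2) * (P k * P k)) f)
        + 2 * b * ev n ((P d ^ a * L n ^ (b - 1)) f))
      = 4 * (b * (b - 1) : ℂ) *
          (∑ k ∈ J n, (epsSet I k : ℂ) * ev n ((P d ^ a * L n ^ (b - 2) * (P k * P k)) f))
        + (∑ k ∈ J n, (epsSet I k : ℂ)) * (2 * b * ev n ((P d ^ a * L n ^ (b - 1)) f)) := by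
    rw [Finset.mul_sum, Finset.sum_mul, ← Finset.sum_add_distrib]
    exact Finset.sum_congr rfl fun k _ => by ring
  rw [e3, e2]
  linear_combination 4 * e1

lemma sum_eps {n : ℕ} (hn : 0 < n) (I : Finset (Fin n)) (hnI : (⟨n - 1, by omega⟩ : Fin n) ∈ I) :
    ∑ k ∈ J n, (epsSet I k : ℂ) = 2 * (I.card : ℂ) - n - 1 := by
  have hJ : J n = Finset.univ.erase (⟨n - 1, by omega⟩ : Fin n) := by
    ext k
    simp only [J, Finset.mem_filter, Finset.mem_univ, true_and, Finset.mem_erase, and_true,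
      ne_eq, Fin.ext_iff]
    omega
  have h := Finset.add_sum_erase Finset.univ (fun k => (epsSet I k : ℂ))
    (Finset.mem_univ (⟨n - 1, by omega⟩ : Fin n))
  have h1 : ∑ k : Fin n, (epsSet I k : ℂ) = 2 * (I.card : ℂ) - n := by
    have : ∀ k : Fin n, (epsSet I k : ℂ) = 2 * (if k ∈ I then 1 else 0) - 1 := by
      intro k; unfold epsSet; split_ifs <;> norm_num
    simp only [this, Finset.sum_sub_distrib, ← Finset.mul_sum]
    simp
  have h2 : (epsSet I (⟨n - 1, by omega⟩ : Fin n) : ℂ) = 1 := by simp [epsSet, hnI]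
  rw [hJ]
  linear_combination h - h2 + h1

/-- For I ⊆ {1,…,n} with n ∈ I and #I = i:
`(x_n² + Σ_{k=1}^{n−1} ε_I(k) x_k²)·𝒦_{λ−1,ν+1}
   = 4(ν − n + i)·𝒦_{λ,ν} − 8(Σ_{k∈{1,…,n−1}∖I} ∂_k²)𝒦_{λ+1,ν−1}`
as tempered distributions on ℝ^n, tested against an arbitrary Schwartz function `φ`. -/
theorem stmt18 (n : ℕ) (hn : 2 ≤ n) (lam nu : ℂ) (l : ℤ) (hl : 0 ≤ l)
    (hln : nu - lam = (l : ℂ)) (i : ℕ) (I : Finset (Fin n))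
    (hnI : (⟨n - 1, by omega⟩ : Fin n) ∈ I) (hI : I.card = i)
    (φ : SchwartzMap (Fin n → ℝ) ℂ) :
    Kact n (lam - 1) (l + 2)
        (fun x => (((x ⟨n - 1, by omega⟩) ^ 2
          + ∑ k ∈ Finset.univ.filter (fun k : Fin n => (k : ℕ) < n - 1),
              epsSet I k * (x k) ^ 2 : ℝ) : ℂ) * φ x)
      = 4 * (nu - (n : ℂ) + (i : ℂ)) * Kact n lam l ⇑φ
        - 8 * Kact n (lam + 1) (l - 2)
            (fun y => ∑ k ∈ (Finset.univ.filter (fun k : Fin n => (k : ℕ) < n - 1)) \ I,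
              pd k (pd k ⇑φ) y) := by
  obtain ⟨N, rfl⟩ := Int.eq_ofNat_of_zero_le hl
  have hn0 : 0 < n := by omega
  subst hI
  set d : Fin n := ⟨n - 1, by omega⟩ with hd_def
  have hd : d ∉ J n := by simp [J, hd_def]
  let f : Smo n := ⟨⇑φ, φ.smooth'⟩
  have hq : (fun x : Fin n → ℝ => (((x d) ^ 2 + ∑ k ∈ Finset.univ.filter
        (fun k : Fin n => (k : ℕ) < n - 1), epsSet I k * (x k) ^ 2 : ℝ) : ℂ) * φ x)
      = ((X d * X d + ∑ k ∈ J n, (epsSet I k : ℂ) • (X k * X k)) f : Smo n) := by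
    ext x
    have hX : ∀ k, ((X k * X k) f : (Fin n → ℝ) → ℂ) x = (x k : ℂ) * ((x k : ℂ) * φ x) :=
      fun k => rfl
    simp only [LinearMap.add_apply, LinearMap.sum_apply, LinearMap.smul_apply, Submodule.coe_add,
      Submodule.coe_sum, Submodule.coe_smul, Pi.add_apply, Finset.sum_apply, Pi.smul_apply, hX,
      smul_eq_mul]
    push_cast
    rw [add_mul, Finset.sum_mul]
    congr 1
    · ring
    · exact Finset.sum_congr rfl fun k _ => by ring
  have hm : (fun y => ∑ k ∈ (Finset.univ.filter (fun k : Fin n => (k : ℕ) < n - 1)) \ I,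
        pd k (pd k ⇑φ) y) = ((∑ k ∈ J n \ I, P k * P k) f : Smo n) := by
    ext y
    simp only [LinearMap.sum_apply, Submodule.coe_sum, Finset.sum_apply]
    rfl
  rw [hq, hm, show ((N : ℤ) + 2) = ((N + 2 : ℕ) : ℤ) by push_cast; rfl, Kact_coe hn0,
    show (⇑φ) = (f : (Fin n → ℝ) → ℂ) from rfl,
    Kact_coe hn0 lam N]
  set α : ℂ := lam - ((n : ℂ) - 1) / 2 with hα
  have hα1 : lam - 1 - ((n : ℂ) - 1) / 2 = α - 1 := by rw [hα]; ring
  have hα2 : lam + 1 - ((n : ℂ) - 1) / 2 = α + 1 := by rw [hα]; ring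
  let u : ℕ → ℕ → ℂ := fun a b => ev n ((P d ^ a * L n ^ b) f)
  let v : ℕ → ℕ → ℂ := fun a b => ev n ((P d ^ a * L n ^ b) ((∑ k ∈ J n \ I, P k * P k) f))
  have hK : Kact n (lam + 1) ((N : ℤ) - 2) ((∑ k ∈ J n \ I, P k * P k) f : Smo n)
      = (-1) ^ N * (if 2 ≤ N then ∑ k ∈ Finset.range ((N - 2) / 2 + 1),
          A (α + 1) (N - 2) k * v (N - 2 - 2 * k) k else 0) := by
    split_ifs with hN
    · obtain ⟨M, rfl⟩ := Nat.exists_eq_add_of_le' hN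
      rw [show (((M + 2 : ℕ) : ℤ) - 2) = (M : ℤ) by push_cast; ring, Kact_coe hn0, hα2,
        Nat.add_sub_cancel, Finset.mul_sum]
      refine Finset.sum_congr rfl fun k hk => ?_
      have hk' : 2 * k ≤ M := by have := Finset.mem_range.1 hk; omega
      rw [gegen_A _ hk', pow_add (-1 : ℂ) M 2, neg_one_sq, mul_one]
    · rw [Kact, if_neg (by omega), mul_zero]
  have hid := sum_identity α (2 * (I.card : ℂ) - n - 1) N u v
  rw [hK, hα1]
  have h1 : ∑ k ∈ Finset.range ((N + 2) / 2 + 1), gegenCoeff (α - 1) (N + 2) k *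
      ((-1 : ℂ) ^ k * ((-1 : ℂ) ^ (N + 2 - 2 * k) * ev n ((P d ^ (N + 2 - 2 * k) * L n ^ k)
        ((X d * X d + ∑ k ∈ J n, (epsSet I k : ℂ) • (X k * X k)) f))))
      = (-1) ^ N * ∑ b ∈ Finset.range ((N + 2) / 2 + 1), A (α - 1) (N + 2) b *
      (((N + 2 - 2 * b : ℕ) : ℂ) * (((N + 2 - 2 * b : ℕ) : ℂ) - 1) * u (N + 2 - 2 * b - 2) b
        + (2 * b * ((2 * (I.card : ℂ) - n - 1) + 2 * (b - 1)) : ℂ) * u (N + 2 - 2 * b) (b - 1)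
        - 8 * (b * (b - 1) : ℂ) * v (N + 2 - 2 * b) (b - 2)) := by
    rw [Finset.mul_sum]
    refine Finset.sum_congr rfl fun k hk => ?_
    have hk' : 2 * k ≤ N + 2 := by have := Finset.mem_range.1 hk; omega
    rw [gegen_A _ hk', ← Module.End.mul_apply, ev_quadratic hd, sum_eps hn0 I hnI,
      pow_add (-1 : ℂ) N 2, neg_one_sq, mul_one]
  have h2 : ∑ k ∈ Finset.range (N / 2 + 1), gegenCoeff α N k *
      ((-1 : ℂ) ^ k * ((-1 : ℂ) ^ (N - 2 * k) * ev n ((P d ^ (N - 2 * k) * L n ^ k) f)))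
      = (-1) ^ N * ∑ k ∈ Finset.range (N / 2 + 1), A α N k * u (N - 2 * k) k := by
    rw [Finset.mul_sum]
    refine Finset.sum_congr rfl fun k hk => ?_
    have hk' : 2 * k ≤ N := by have := Finset.mem_range.1 hk; omega
    rw [gegen_A _ hk']
  have hnu : nu = lam + N := by
    have : nu - lam = (N : ℂ) := by simpa using hln
    linear_combination this
  rw [h1, h2, hid, ← Finset.mul_sum, hnu, hα]
  ring
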